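/- arXiv:2303.06134 — 2 statements merged into one kernel-verified Lean document; each statement's English description precedes it below -/
import Mathlib

section
/- Let (X, ν) be a probability space and let φ : X → ℝ be measurable with ∫|φ|³ dν < ∞. Let t̄ = ∫ φ dν be the mean, σ = (∫ (φ − t̄)² dν)^{1/2} the standard deviation, and assume σ > 0; let κ = σ^{−3} ∫ (φ − t̄)³ dν be the skewness. Then the cubic equation ∫ (φ(y) − x)³ dν(y) = 0 has exactly one real solution x, and it is given explicitly by x = (σ/∛2)·( ∛(κ + √(κ² + 4)) + ∛(κ − √(κ² + 4)) ) + t̄. -/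
open MeasureTheory

/-- The real (signed) cube root: `cbrt t = sign(t) * |t|^(1/3)`. -/
noncomputable def cbrt (t : ℝ) : ℝ := Real.sign t * |t| ^ ((1 : ℝ) / 3)

/-!
Expanding around the mean `t̄` turns `∫ (φ - x)³ dν` into `κσ³ - 3σ²(x - t̄) - (x - t̄)³`, so the
equation for `u = (x - t̄) / σ` is the depressed cubic `u³ + 3u = κ`. Its left side is strictly
increasing in `u`, and Cardano's formula exhibits the only root.
-/

open ProbabilityTheory Finset

section Cardano

theorem rpow_one_third_pow_three {x : ℝ} (hx : 0 ≤ x) : (x ^ ((1 : ℝ) / 3)) ^ 3 = x := by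
  simpa only [one_div, Nat.cast_ofNat] using Real.rpow_inv_natCast_pow hx three_ne_zero

theorem cbrt_pow_three (t : ℝ) : cbrt t ^ 3 = t := by
  rw [cbrt, mul_pow, rpow_one_third_pow_three (abs_nonneg t)]
  obtain ht | rfl | ht := lt_trichotomy t 0
  · rw [Real.sign_of_neg ht, abs_of_neg ht]
    ring
  · simp
  · rw [Real.sign_of_pos ht, abs_of_pos ht]
    ring

theorem strictMono_odd_pow_add_mul {R : Type*} [Ring R] [LinearOrder R] [IsStrictOrderedRing R]
    {n : ℕ} (hn : Odd n) {a : R} (ha : 0 ≤ a) : StrictMono fun x : R ↦ x ^ n + a * x :=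
  hn.strictMono_pow.add_monotone (monotone_mul_left_of_nonneg ha)

theorem cbrt_add_sqrt_mul_cbrt_sub_sqrt {p q : ℝ} (h : 0 ≤ q ^ 2 + 4 * p ^ 3) :
    cbrt (q + √(q ^ 2 + 4 * p ^ 3)) * cbrt (q - √(q ^ 2 + 4 * p ^ 3)) =
      -p * ((2 : ℝ) ^ ((1 : ℝ) / 3)) ^ 2 := by
  refine (Odd.strictMono_pow (by decide : Odd 3)).injective ?_
  have two_sq : (((2 : ℝ) ^ ((1 : ℝ) / 3)) ^ 2) ^ 3 = 2 ^ 2 := by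
    rw [pow_right_comm, rpow_one_third_pow_three zero_le_two]
  simp only [mul_pow, cbrt_pow_three, two_sq]
  linear_combination -Real.sq_sqrt h

theorem cardano_formula {p q : ℝ} (h : 0 ≤ q ^ 2 + 4 * p ^ 3) {u : ℝ}
    (hu : u = (cbrt (q + √(q ^ 2 + 4 * p ^ 3)) + cbrt (q - √(q ^ 2 + 4 * p ^ 3))) /
      (2 : ℝ) ^ ((1 : ℝ) / 3)) :
    u ^ 3 + 3 * p * u = q := by
  have hab := cbrt_add_sqrt_mul_cbrt_sub_sqrt h
  have ha := cbrt_pow_three (q + √(q ^ 2 + 4 * p ^ 3))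
  have hb := cbrt_pow_three (q - √(q ^ 2 + 4 * p ^ 3))
  have hc : ((2 : ℝ) ^ ((1 : ℝ) / 3)) ^ 3 = 2 := rpow_one_third_pow_three zero_le_two
  set a := cbrt (q + √(q ^ 2 + 4 * p ^ 3))
  set b := cbrt (q - √(q ^ 2 + 4 * p ^ 3))
  set c := (2 : ℝ) ^ ((1 : ℝ) / 3)
  have huc : u * c = a + b := by
    rw [hu, div_mul_cancel₀]
    positivity
  have two_mul_cubic : 2 * (u ^ 3 + 3 * p * u) = 2 * q :=
    calc 2 * (u ^ 3 + 3 * p * u) = (u * c) ^ 3 + 3 * (p * c ^ 2) * (u * c) := by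
          linear_combination (-(u ^ 3) - 3 * p * u) * hc
      _ = (a + b) ^ 3 - 3 * (a * b) * (a + b) := by rw [huc, hab]; ring
      _ = a ^ 3 + b ^ 3 := by ring
      _ = 2 * q := by rw [ha, hb]; ring
  exact mul_left_cancel₀ two_ne_zero two_mul_cubic

theorem pow_three_add_mul_eq_iff {p q : ℝ} (hp : 0 ≤ p) {u : ℝ} :
    u ^ 3 + 3 * p * u = q ↔
      u = (cbrt (q + √(q ^ 2 + 4 * p ^ 3)) + cbrt (q - √(q ^ 2 + 4 * p ^ 3))) /
        (2 : ℝ) ^ ((1 : ℝ) / 3) := by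
  have root := cardano_formula (p := p) (q := q) (by positivity) rfl
  refine ⟨fun h ↦ ?_, cardano_formula (by positivity)⟩
  have strictMono := strictMono_odd_pow_add_mul (by decide : Odd 3) (mul_nonneg zero_le_three hp)
  exact strictMono.injective (h.trans root.symm)

end Cardano

section Moments

variable {X : Type*} [MeasurableSpace X] {ν : Measure X}

theorem integrable_pow_of_memLp [IsFiniteMeasure ν] {𝕜 : Type*} [RCLike 𝕜] {f : X → 𝕜} {k n : ℕ}
    (hf : MemLp f n ν) (hkn : k ≤ n) : Integrable (fun y ↦ f y ^ k) ν := by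
  refine (integrable_norm_iff (hf.aestronglyMeasurable.pow k)).mp ?_
  simpa only [Pi.pow_apply, norm_pow] using
    (hf.mono_exponent (Nat.cast_le.mpr hkn)).integrable_norm_pow'

theorem integral_add_const_pow [IsFiniteMeasure ν] {𝕜 : Type*} [RCLike 𝕜] {f : X → 𝕜} {n : ℕ}
    (hf : MemLp f n ν) (c : 𝕜) :
    ∫ y, (f y + c) ^ n ∂ν =
      ∑ k ∈ range (n + 1), (∫ y, f y ^ k ∂ν) * c ^ (n - k) * (n.choose k : 𝕜) := by
  simp only [add_pow]
  rw [integral_finsetSum]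
  · simp only [integral_mul_const]
  · intro k hk
    have hkn : k ≤ n := mem_range_succ_iff.mp hk
    exact ((integrable_pow_of_memLp hf hkn).mul_const _).mul_const _

theorem integral_sub_const_pow_eq_sum_centralMoment [IsFiniteMeasure ν] {f : X → ℝ} {n : ℕ}
    (hf : MemLp f n ν) (x : ℝ) :
    ∫ y, (f y - x) ^ n ∂ν =
      ∑ k ∈ range (n + 1), centralMoment f k ν * (ν[f] - x) ^ (n - k) * (n.choose k : ℝ) := by
  simpa [centralMoment] using
    integral_add_const_pow (hf.sub (memLp_const ν[f])) (ν[f] - x)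

theorem integral_sub_const_pow_three [IsProbabilityMeasure ν] {f : X → ℝ} (hf : MemLp f 3 ν)
    (x : ℝ) :
    ∫ y, (f y - x) ^ 3 ∂ν =
      centralMoment f 3 ν - 3 * Var[f; ν] * (x - ν[f]) - (x - ν[f]) ^ 3 := by
  rw [integral_sub_const_pow_eq_sum_centralMoment (n := 3) hf]
  have centralMoment_zeroth : centralMoment f 0 ν = 1 := by simp [centralMoment]
  simp only [sum_range_succ, range_zero, sum_empty, centralMoment_zeroth, centralMoment_one,
    centralMoment_two_eq_variance hf.aestronglyMeasurable.aemeasurable, Nat.choose_zero_right,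
    Nat.choose_succ_self_right, Nat.choose_self, Nat.reduceSub]
  push_cast
  ring

end Moments

/-- The 4-average of `φ`, i.e. the unique solution `x` of `∫ (φ - x)³ dν = 0`, is given
explicitly in terms of the mean `t̄`, standard deviation `σ` and skewness `κ` of `φ`. -/
theorem fourAverage_eq_mean_sd_skewness {X : Type*} [MeasurableSpace X]
    (ν : Measure X) [IsProbabilityMeasure ν]
    (φ : X → ℝ) (hφ : Measurable φ)
    (hint : Integrable (fun y => |φ y| ^ 3) ν)
    (tbar σ κ : ℝ)
    (htbar : tbar = ∫ y, φ y ∂ν)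
    (hσ : σ = Real.sqrt (∫ y, (φ y - tbar) ^ 2 ∂ν))
    (hσpos : 0 < σ)
    (hκ : κ = σ⁻¹ ^ 3 * ∫ y, (φ y - tbar) ^ 3 ∂ν) :
    ∀ x : ℝ,
      (∫ y, (φ y - x) ^ 3 ∂ν) = 0 ↔
        x = (σ / (2 : ℝ) ^ ((1 : ℝ) / 3)) *
              (cbrt (κ + Real.sqrt (κ ^ 2 + 4)) + cbrt (κ - Real.sqrt (κ ^ 2 + 4))) + tbar := by
  intro x
  have hφ₃ : MemLp φ 3 ν :=
    (integrable_norm_rpow_iff hφ.aestronglyMeasurable (by simp) (by simp)).mp (by simpa using hint)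
  have variance_eq : Var[φ; ν] = σ ^ 2 := by
    rw [variance_eq_integral hφ.aemeasurable, ← htbar, hσ,
      Real.sq_sqrt (integral_nonneg fun y ↦ sq_nonneg _)]
  have centralMoment_eq : centralMoment φ 3 ν = κ * σ ^ 3 := by
    rw [hκ, htbar]
    simp only [centralMoment, Pi.pow_apply, Pi.sub_apply]
    field_simp
  have integral_eq : ∫ y, (φ y - x) ^ 3 ∂ν =
      σ ^ 3 * (κ - (((x - tbar) / σ) ^ 3 + 3 * 1 * ((x - tbar) / σ))) := by
    rw [integral_sub_const_pow_three hφ₃, variance_eq, centralMoment_eq, ← htbar]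
    field_simp
    ring
  calc (∫ y, (φ y - x) ^ 3 ∂ν) = 0
      ↔ ((x - tbar) / σ) ^ 3 + 3 * 1 * ((x - tbar) / σ) = κ := by
        rw [integral_eq, mul_eq_zero_iff_left (by positivity), sub_eq_zero, eq_comm]
    _ ↔ (x - tbar) / σ = (cbrt (κ + √(κ ^ 2 + 4)) + cbrt (κ - √(κ ^ 2 + 4))) /
          (2 : ℝ) ^ ((1 : ℝ) / 3) := by
        rw [pow_three_add_mul_eq_iff zero_le_one, one_pow, mul_one]
    _ ↔ _ := by rw [div_eq_iff hσpos.ne', sub_eq_iff_eq_add, div_mul_comm]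
end

section
/- Consider the data set {1, 6, 11, 13, 19} and let c be the unique real number minimizing c ↦ Σ_{x ∈ {1,6,11,13,19}} |x − c|⁶, equivalently the unique real solution of (c−1)⁵ + (c−6)⁵ + (c−11)⁵ + (c−13)⁵ + (c−19)⁵ = 0. Then c is not expressible by radicals over ℚ; that is, c is algebraic over ℚ (it is a root of the rational quintic x⁵ + 376x³ + 72x² + 13460x + 156 shifted by 10, i.e. c − 10 is a root of that quintic) but c does not lie in the solvable-by-radicals closure of ℚ. Equivalently, the polynomial x⁵ + 376x³ + 72x² + 13460x + 156 ∈ ℚ[x] is irreducible and not solvable by radicals. -/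
open Polynomial

/-! Reduction modulo 7 shows that the quintic is irreducible, so its Galois group acts transitively
on the five roots. Modulo 11 the quintic has an irreducible cubic factor, so the residue degree of a
prime of the splitting field above 11 is a multiple of 3, and so is the order of the group. An
element of order 3 in `S₅` is a 3-cycle, and by Jordan's theorem a transitive group of prime degree
containing a 3-cycle contains the alternating group; hence the Galois group is not solvable. -/

section PermutationGroups

open Equiv.Perm

theorem alternatingGroup_le_of_isPreprimitive_of_three_dvd_card {α : Type*} [Fintype α]
    [DecidableEq α] {H : Subgroup (Equiv.Perm α)} (hH : MulAction.IsPreprimitive H α)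
    (hα : Fintype.card α < 6) (h3 : 3 ∣ Nat.card H) : alternatingGroup α ≤ H := by
  have : Fact (Nat.Prime 3) := ⟨Nat.prime_three⟩
  obtain ⟨σ, hσ⟩ := exists_prime_orderOf_dvd_card' 3 h3
  have hσ' : orderOf (σ : Equiv.Perm α) = 3 := by rw [Subgroup.orderOf_coe, hσ]
  have hcycle : (σ : Equiv.Perm α).IsCycle :=
    isCycle_of_prime_order' (hσ' ▸ Nat.prime_three) (by lia)
  have hthree : (σ : Equiv.Perm α).IsThreeCycle :=
    card_support_eq_three_iff.mp (hcycle.orderOf ▸ hσ')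
  exact alternatingGroup_le_of_isPreprimitive_of_isThreeCycle_mem hH hthree σ.2

theorem not_isSolvable_of_isPretransitive_of_three_dvd_card {G α : Type*} [Group G] [MulAction G α]
    [FaithfulSMul G α] [MulAction.IsPretransitive G α] (hα : Nat.card α = 5)
    (h3 : 3 ∣ Nat.card G) : ¬ Group.IsSolvable G := by
  classical
  intro hG
  have : Finite α := Nat.finite_of_card_ne_zero (by simp [hα])
  have : Fintype α := Fintype.ofFinite α
  let φ : G →* Equiv.Perm α := MulAction.toPermHom G α
  have hφ : Function.Injective φ := MulAction.toPerm_injective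
  have : MulAction.IsPretransitive φ.range α :=
    ⟨fun x y ↦ (MulAction.exists_smul_eq G x y).imp' φ.rangeRestrict fun _ hg ↦ hg⟩
  have hprim : MulAction.IsPreprimitive φ.range α :=
    MulAction.IsPreprimitive.of_prime_card (hα ▸ Nat.prime_five)
  rw [Nat.card_congr (φ.ofInjective hφ).toEquiv] at h3
  rw [Nat.card_eq_fintype_card] at hα
  have hle := alternatingGroup_le_of_isPreprimitive_of_three_dvd_card hprim (by lia) h3
  have : Group.IsSolvable (Equiv.Perm α) := Group.isSolvable_of_ker_le_range φ sign hle
  exact not_isSolvable α (by simp [Cardinal.mk_fintype, hα]) this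

end PermutationGroups

section Reduction

theorem splits_map_of_isIntegralClosure {A B L : Type*} [CommRing A] [CommRing B] [Field L]
    [Algebra A B] [Algebra A L] [Algebra B L] [IsScalarTower A B L] [IsIntegralClosure B A L]
    {f : A[X]} (hf : f.Monic)
    (hsplits : (f.map (algebraMap A L)).Splits) : (f.map (algebraMap A B)).Splits := by
  refine Splits.of_splits_map_of_injective (i := algebraMap B L)
    (IsIntegralClosure.algebraMap_injective B A L) ?_ fun a ha ↦ ?_
  · rwa [map_map, ← IsScalarTower.algebraMap_eq]
  · rw [map_map, ← IsScalarTower.algebraMap_eq, mem_roots', IsRoot.def, eval_map] at ha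
    exact (IsIntegralClosure.isIntegral_iff (A := B)).mp ⟨f, hf, ha.2⟩

theorem inertiaDeg_dvd_natCard {A B : Type*} [CommRing A] [IsDomain A] [CommRing B] [IsDomain B]
    [Algebra A B] [Module.Finite A B] [Module.Flat A B] (G : Type*) [Group G] [Finite G]
    [MulSemiringAction G B] [IsGaloisGroup G A B] (p : Ideal A) [p.IsPrime] (P : Ideal B)
    [P.IsPrime] [P.LiesOver p] : P.inertiaDeg A ∣ Nat.card G := by
  rw [← Ideal.ncard_primesOver_mul_ramificationIdxIn_mul_inertiaDegIn p B G,
    Ideal.inertiaDegIn_eq_inertiaDeg p P G]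
  exact (dvd_mul_left _ _).mul_left _

theorem natDegree_dvd_inertiaDeg {A B : Type*} [CommRing A] [CommRing B] [Algebra A B]
    (p : Ideal A) [p.IsMaximal] (P : Ideal B) [P.IsMaximal] [P.LiesOver p] {f : A[X]}
    (hf : f.Monic) (hsplits : (f.map (algebraMap A B)).Splits) {g : (A ⧸ p)[X]}
    (hg : Irreducible g) (hgf : g ∣ f.map (Ideal.Quotient.mk p)) :
    g.natDegree ∣ P.inertiaDeg A := by
  let _ : Field (A ⧸ p) := Ideal.Quotient.field p
  let _ : Field (B ⧸ P) := Ideal.Quotient.field P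
  have hres : ((f.map (Ideal.Quotient.mk p)).map (algebraMap (A ⧸ p) (B ⧸ P))).Splits := by
    have h := hsplits.map (algebraMap B (B ⧸ P))
    rwa [map_map, ← IsScalarTower.algebraMap_eq, IsScalarTower.algebraMap_eq A (A ⧸ p),
      ← map_map] at h
  rw [Ideal.inertiaDeg_eq_of_isMaximal p]
  exact hg.natDegree_dvd_finrank
    (hres.of_dvd (((hf.map _).map _).ne_zero) (Polynomial.map_dvd _ hgf))

theorem natDegree_dvd_finrank_of_dvd_map {A K L k : Type*} [CommRing A] [IsDedekindDomain A]
    [Field K] [Algebra A K] [IsFractionRing A K] [Field L] [Algebra K L] [FiniteDimensional K L]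
    [IsGalois K L] [Algebra A L] [IsScalarTower A K L] [Field k] {φ : A →+* k}
    (hφ : Function.Surjective φ) {f : A[X]} (hf : f.Monic)
    (hsplits : (f.map (algebraMap A L)).Splits) {g : k[X]} (hg : Irreducible g)
    (hgf : g ∣ f.map φ) : g.natDegree ∣ Module.finrank K L := by
  let B := integralClosure A L
  have : FaithfulSMul A L := .trans A K L
  have : FaithfulSMul A B := .tower_bot A B L
  have : IsFractionRing B L := integralClosure.isFractionRing_of_finite_extension K L
  have : Module.Finite A B := IsIntegralClosure.finite A K L B
  let _ : MulSemiringAction Gal(L/K) B := IsIntegralClosure.MulSemiringAction A K L B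
  have : IsGaloisGroup Gal(L/K) A B := .of_isFractionRing _ _ _ K L
  have : (RingHom.ker φ).IsMaximal := RingHom.ker_isMaximal_of_surjective φ hφ
  obtain ⟨⟨P, _, _⟩⟩ := (RingHom.ker φ).nonempty_primesOver (S := B)
  have : P.IsMaximal := Ideal.IsMaximal.of_liesOver_isMaximal P (RingHom.ker φ)
  let e : k ≃+* A ⧸ RingHom.ker φ := (RingHom.quotientKerEquivOfSurjective hφ).symm
  have he : (e : k →+* A ⧸ RingHom.ker φ).comp φ = Ideal.Quotient.mk (RingHom.ker φ) :=
    RingHom.ext fun _ ↦ (RingHom.quotientKerEquivOfSurjective hφ).symm_apply_eq.mpr rfl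
  have hge : g.map (e : k →+* A ⧸ RingHom.ker φ) ∣ f.map (Ideal.Quotient.mk (RingHom.ker φ)) := by
    simpa only [map_map, he] using Polynomial.map_dvd (e : k →+* A ⧸ RingHom.ker φ) hgf
  have hirr : Irreducible (g.map (e : k →+* A ⧸ RingHom.ker φ)) :=
    (MulEquiv.irreducible_iff (mapEquiv e)).mpr hg
  rw [← IsGalois.card_aut_eq_finrank, ← natDegree_map_eq_of_injective
    (f := (e : k →+* A ⧸ RingHom.ker φ)) e.injective g]
  exact (natDegree_dvd_inertiaDeg (RingHom.ker φ) P hf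
    (splits_map_of_isIntegralClosure hf hsplits) hirr hge).trans
      (inertiaDeg_dvd_natCard Gal(L/K) (RingHom.ker φ) P)

theorem natDegree_dvd_card_gal_of_dvd_map {A K k : Type*} [CommRing A] [IsDedekindDomain A]
    [Field K] [Algebra A K] [IsFractionRing A K] [Field k] {φ : A →+* k}
    (hφ : Function.Surjective φ) {f : A[X]} (hf : f.Monic)
    (hsep : (f.map (algebraMap A K)).Separable) {g : k[X]} (hg : Irreducible g)
    (hgf : g ∣ f.map φ) : g.natDegree ∣ Nat.card (f.map (algebraMap A K)).Gal := by
  let L := (f.map (algebraMap A K)).SplittingField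
  have : IsGalois K L := IsGalois.of_separable_splitting_field hsep
  have hsplits : (f.map (algebraMap A L)).Splits := by
    rw [IsScalarTower.algebraMap_eq A K L, ← map_map]
    exact IsSplittingField.splits L _
  rw [Gal.card_of_separable hsep]
  exact natDegree_dvd_finrank_of_dvd_map hφ hf hsplits hg hgf

end Reduction

section SolvabilityByRadicals

theorem not_isSolvable_gal_of_natDegree_eq_five {F : Type*} [Field F] {f : F[X]}
    (hirr : Irreducible f) (hsep : f.Separable) (hdeg : f.natDegree = 5)
    (h3 : 3 ∣ Nat.card f.Gal) : ¬ Group.IsSolvable f.Gal := by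
  have : Fact ((f.map (algebraMap F (AlgebraicClosure F))).Splits) :=
    ⟨IsAlgClosed.splits _⟩
  have : MulAction.IsPretransitive f.Gal (f.rootSet (AlgebraicClosure F)) :=
    Gal.galAction_isPretransitive f (AlgebraicClosure F) hirr
  have : FaithfulSMul f.Gal (f.rootSet (AlgebraicClosure F)) :=
    ⟨fun h ↦ Gal.galActionHom_injective f (AlgebraicClosure F) (Equiv.ext h)⟩
  refine not_isSolvable_of_isPretransitive_of_three_dvd_card
    (α := f.rootSet (AlgebraicClosure F)) ?_ h3
  rw [Nat.card_eq_fintype_card,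
    card_rootSet_eq_natDegree hsep (IsAlgClosed.splits _), hdeg]

theorem mem_solvableByRad_of_isSolvableByRad {F E : Type*} [Field F] [Field E] [Algebra F E]
    {x : E} (hx : IsSolvableByRad F x) : x ∈ solvableByRad F E := by
  induction hx with
  | base a => exact algebraMap_mem _ a
  | add _ _ _ _ ha hb => exact add_mem ha hb
  | neg _ _ ha => exact neg_mem ha
  | mul _ _ _ _ ha hb => exact mul_mem ha hb
  | inv _ _ ha => exact inv_mem ha
  | rad _ _ hn _ ha => exact solvableByRad.rad_mem hn ha

theorem not_isSolvableByRad_of_not_isSolvable_gal {F E : Type*} [Field F] [Field E] [Algebra F E]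
    {f : F[X]} (hirr : Irreducible f) (hgal : ¬ Group.IsSolvable f.Gal) {x : E}
    (hx : aeval x f = 0) : ¬ IsSolvableByRad F x := fun h ↦
  hgal (isSolvable_gal_of_irreducible (mem_solvableByRad_of_isSolvableByRad h) hirr hx)

end SolvabilityByRadicals

section DepressedQuintic

/-- The general monic quintic polynomial without quartic term: the shape of the quintic of the
6-average once the data are centred at their mean. -/
noncomputable def depressedQuintic {R : Type*} [Semiring R] (p q r s : R) : R[X] :=
  X ^ 5 + C p * X ^ 3 + C q * X ^ 2 + C r * X + C s

theorem depressedQuintic_monic {R : Type*} [Semiring R] (p q r s : R) :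
    (depressedQuintic p q r s).Monic := by
  nontriviality R
  unfold depressedQuintic
  monicity!

theorem natDegree_depressedQuintic {R : Type*} [Semiring R] [Nontrivial R] (p q r s : R) :
    (depressedQuintic p q r s).natDegree = 5 := by
  unfold depressedQuintic
  compute_degree!

theorem map_depressedQuintic {R S : Type*} [Semiring R] [Semiring S] (φ : R →+* S)
    (p q r s : R) :
    (depressedQuintic p q r s).map φ = depressedQuintic (φ p) (φ q) (φ r) (φ s) := by
  simp [depressedQuintic]

theorem quadratic_dvd_depressedQuintic_iff {R : Type*} [CommRing R] {a b p q r s : R} :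
    X ^ 2 + C a * X + C b ∣ depressedQuintic p q r s ↔
      a ^ 4 - 3 * a ^ 2 * b + b ^ 2 + p * (a ^ 2 - b) - q * a + r = 0 ∧
        a ^ 3 * b - 2 * a * b ^ 2 + p * a * b - q * b + s = 0 := by
  nontriviality R
  set u := a ^ 4 - 3 * a ^ 2 * b + b ^ 2 + p * (a ^ 2 - b) - q * a + r with hu
  set v := a ^ 3 * b - 2 * a * b ^ 2 + p * a * b - q * b + s with hv
  have hmonic : (X ^ 2 + C a * X + C b).Monic := by monicity!
  have hdegree : (C u * X + C v).degree < (X ^ 2 + C a * X + C b).degree := by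
    rw [show (X ^ 2 + C a * X + C b : R[X]).degree = 2 by compute_degree!]
    exact degree_linear_lt
  have hdivision : depressedQuintic p q r s = (X ^ 2 + C a * X + C b) *
      (X ^ 3 - C a * X ^ 2 + C (a ^ 2 - b + p) * X + C (2 * a * b - a ^ 3 - p * a + q)) +
        (C u * X + C v) := by
    simp only [depressedQuintic, hu, hv, C_add, C_sub, C_mul, C_pow, map_ofNat]
    ring
  rw [hdivision, dvd_add_right (dvd_mul_right _ _)]
  refine ⟨fun hdvd ↦ ?_, fun ⟨hu0, hv0⟩ ↦ by simp [hu0, hv0]⟩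
  have hzero : C u * X + C v = 0 := by
    by_contra hne
    exact hmonic.not_dvd_of_degree_lt hne hdegree hdvd
  exact ⟨by simpa using congr(coeff $hzero 1), by simpa using congr(coeff $hzero 0)⟩

theorem irreducible_depressedQuintic {k : Type*} [Field k] {p q r s : k}
    (hlin : ∀ x : k, x ^ 5 + p * x ^ 3 + q * x ^ 2 + r * x + s ≠ 0)
    (hquad : ∀ a b : k, a ^ 4 - 3 * a ^ 2 * b + b ^ 2 + p * (a ^ 2 - b) - q * a + r = 0 →
      a ^ 3 * b - 2 * a * b ^ 2 + p * a * b - q * b + s ≠ 0) :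
    Irreducible (depressedQuintic p q r s) := by
  have hmonic := depressedQuintic_monic p q r s
  have hdeg := natDegree_depressedQuintic p q r s
  have hone : depressedQuintic p q r s ≠ 1 := by
    intro h
    simp [h] at hdeg
  rw [hmonic.irreducible_iff_lt_natDegree_lt hone, hdeg]
  intro g hg hgdeg hdvd
  obtain hg1 | hg2 : g.natDegree = 1 ∨ g.natDegree = 2 := by
    rw [Finset.mem_Ioc] at hgdeg
    lia
  · rw [hg.eq_X_add_C hg1, ← sub_neg_eq_add, ← C_neg, dvd_iff_isRoot] at hdvd
    exact hlin (-g.coeff 0) (by simpa [depressedQuintic] using hdvd)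
  · have hquadratic : g = X ^ 2 + C (g.coeff 1) * X + C (g.coeff 0) := by
      refine hg.as_sum.trans ?_
      rw [hg2]
      simp only [Finset.sum_range_succ, Finset.sum_range_zero, pow_zero, pow_one, mul_one]
      ring
    rw [hquadratic, quadratic_dvd_depressedQuintic_iff] at hdvd
    exact hquad _ _ hdvd.1 hdvd.2

end DepressedQuintic

section SixAverageQuintic

/-- The quintic `x ↦ ∑ (x - xᵢ)⁵` of the 6-average of `{1, 6, 11, 13, 19}`, recentred at the mean
`10` of the data and divided by `5`. Taking coefficients in an arbitrary semiring allows reduction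
modulo primes. -/
noncomputable abbrev sixAverageQuintic (R : Type*) [Semiring R] : R[X] :=
  depressedQuintic 376 72 13460 156

theorem map_sixAverageQuintic {R S : Type*} [Semiring R] [Semiring S] (φ : R →+* S) :
    (sixAverageQuintic R).map φ = sixAverageQuintic S := by
  simp only [map_depressedQuintic, map_ofNat]

theorem five_mul_aeval_sub_ten_sixAverageQuintic {R : Type*} [CommRing R] [Algebra ℚ R] (x : R) :
    5 * aeval (x - 10) (sixAverageQuintic ℚ) =
      (x - 1) ^ 5 + (x - 6) ^ 5 + (x - 11) ^ 5 + (x - 13) ^ 5 + (x - 19) ^ 5 := by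
  simp only [depressedQuintic, map_add, map_mul, map_pow, aeval_X, map_ofNat]
  ring

theorem irreducible_sixAverageQuintic_zmod_seven : Irreducible (sixAverageQuintic (ZMod 7)) := by
  have hlin : ∀ x : ZMod 7, x ^ 5 + 376 * x ^ 3 + 72 * x ^ 2 + 13460 * x + 156 ≠ 0 := by decide
  have hquad : ∀ a b : ZMod 7,
      a ^ 4 - 3 * a ^ 2 * b + b ^ 2 + 376 * (a ^ 2 - b) - 72 * a + 13460 = 0 →
        a ^ 3 * b - 2 * a * b ^ 2 + 376 * a * b - 72 * b + 156 ≠ 0 := by decide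
  have : Fact (Nat.Prime 7) := ⟨Nat.prime_seven⟩
  exact irreducible_depressedQuintic hlin hquad

theorem irreducible_sixAverageQuintic : Irreducible (sixAverageQuintic ℚ) := by
  have : Fact (Nat.Prime 7) := ⟨Nat.prime_seven⟩
  have hmonic : (sixAverageQuintic ℤ).Monic := depressedQuintic_monic _ _ _ _
  have hint : Irreducible (sixAverageQuintic ℤ) := by
    refine hmonic.irreducible_of_irreducible_map (Int.castRingHom (ZMod 7)) _ ?_
    rw [map_sixAverageQuintic]
    exact irreducible_sixAverageQuintic_zmod_seven
  rwa [hmonic.irreducible_iff_irreducible_map_fraction_map (K := ℚ), map_sixAverageQuintic] at hint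

theorem irreducible_cubic_zmod_eleven :
    Irreducible (X ^ 3 + C 5 * X ^ 2 + C 10 * X + C 4 : (ZMod 11)[X]) := by
  have hroot : ∀ x : ZMod 11, x ^ 3 + 5 * x ^ 2 + 10 * x + 4 ≠ 0 := by decide
  have : Fact (Nat.Prime 11) := ⟨Nat.prime_eleven⟩
  refine irreducible_of_degree_le_three_of_not_isRoot ?_ fun x hx ↦
    hroot x (by simpa [IsRoot.def] using hx)
  rw [show (X ^ 3 + C 5 * X ^ 2 + C 10 * X + C 4 : (ZMod 11)[X]).natDegree = 3 by
    compute_degree!]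
  decide

theorem cubic_dvd_sixAverageQuintic_zmod_eleven :
    X ^ 3 + C 5 * X ^ 2 + C 10 * X + C 4 ∣ sixAverageQuintic (ZMod 11) := by
  have h11 : (11 : (ZMod 11)[X]) = 0 := CharP.ofNat_eq_zero _ 11
  refine ⟨X ^ 2 + C 6 * X + C 6, ?_⟩
  simp only [depressedQuintic, map_ofNat]
  linear_combination (-X ^ 4 + 30 * X ^ 3 - 2 * X ^ 2 + 1216 * X + 12) * h11

theorem three_dvd_card_gal_sixAverageQuintic : 3 ∣ Nat.card (sixAverageQuintic ℚ).Gal := by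
  have : Fact (Nat.Prime 11) := ⟨Nat.prime_eleven⟩
  have hmap : (sixAverageQuintic ℤ).map (algebraMap ℤ ℚ) = sixAverageQuintic ℚ :=
    map_sixAverageQuintic _
  have hdvd : X ^ 3 + C 5 * X ^ 2 + C 10 * X + C 4 ∣
      (sixAverageQuintic ℤ).map (Int.castRingHom (ZMod 11)) := by
    rw [map_sixAverageQuintic]
    exact cubic_dvd_sixAverageQuintic_zmod_eleven
  have hdeg : (X ^ 3 + C 5 * X ^ 2 + C 10 * X + C 4 : (ZMod 11)[X]).natDegree = 3 := by
    compute_degree!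
  rw [← hmap, ← hdeg]
  exact natDegree_dvd_card_gal_of_dvd_map (ZMod.ringHom_surjective (Int.castRingHom _))
    (depressedQuintic_monic _ _ _ _) (hmap ▸ irreducible_sixAverageQuintic.separable)
    irreducible_cubic_zmod_eleven hdvd

theorem not_isSolvable_gal_sixAverageQuintic : ¬ Group.IsSolvable (sixAverageQuintic ℚ).Gal :=
  not_isSolvable_gal_of_natDegree_eq_five irreducible_sixAverageQuintic
    irreducible_sixAverageQuintic.separable (natDegree_depressedQuintic _ _ _ _)
    three_dvd_card_gal_sixAverageQuintic

theorem not_isSolvableByRad_of_aeval_sixAverageQuintic_eq_zero {E : Type*} [Field E] [Algebra ℚ E]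
    {x : E} (hx : aeval x (sixAverageQuintic ℚ) = 0) : ¬ IsSolvableByRad ℚ x :=
  not_isSolvableByRad_of_not_isSolvable_gal irreducible_sixAverageQuintic
    not_isSolvable_gal_sixAverageQuintic hx

end SixAverageQuintic

theorem sum_sub_pow_eq_zero_of_isLocalMin {ι : Type*} (s : Finset ι) (x : ι → ℝ) (n : ℕ) {c : ℝ}
    (hc : IsLocalMin (fun t ↦ ∑ i ∈ s, (x i - t) ^ (n + 1)) c) :
    ∑ i ∈ s, (x i - c) ^ n = 0 := by
  have hderiv : HasDerivAt (fun t ↦ ∑ i ∈ s, (x i - t) ^ (n + 1))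
      (∑ i ∈ s, -((n + 1) * (x i - c) ^ n)) c :=
    HasDerivAt.fun_sum fun i _ ↦ by
      simpa using ((hasDerivAt_id c).const_sub (x i)).fun_pow (n + 1)
  have hzero := hc.hasDerivAt_eq_zero hderiv
  rw [Finset.sum_neg_distrib, ← Finset.mul_sum, neg_eq_zero] at hzero
  exact (mul_eq_zero.mp hzero).resolve_left n.cast_add_one_ne_zero

/-- The 6-average of the data set `{1, 6, 11, 13, 19}` is not expressible by radicals
over `ℚ`: the minimizer `c` of `t ↦ ∑ (xᵢ - t)⁶` satisfies the quintic
`(c-1)⁵ + (c-6)⁵ + (c-11)⁵ + (c-13)⁵ + (c-19)⁵ = 0`, is algebraic over `ℚ` (with `c - 10`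
a root of `x⁵ + 376x³ + 72x² + 13460x + 156`), yet is not solvable by radicals;
equivalently that quintic is irreducible over `ℚ` and not solvable by radicals. -/
theorem sixAverage_not_solvable_by_radicals (c : ℝ)
    (hc : ∀ t : ℝ,
      ((1 : ℝ) - c) ^ 6 + (6 - c) ^ 6 + (11 - c) ^ 6 + (13 - c) ^ 6 + (19 - c) ^ 6 ≤
        ((1 : ℝ) - t) ^ 6 + (6 - t) ^ 6 + (11 - t) ^ 6 + (13 - t) ^ 6 + (19 - t) ^ 6) :
    ((c - 1) ^ 5 + (c - 6) ^ 5 + (c - 11) ^ 5 + (c - 13) ^ 5 + (c - 19) ^ 5 = 0) ∧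
    IsAlgebraic ℚ c ∧
    Polynomial.aeval (c - 10)
      (X ^ 5 + C 376 * X ^ 3 + C 72 * X ^ 2 + C 13460 * X + C 156 : ℚ[X]) = 0 ∧
    ¬ IsSolvableByRad ℚ c ∧
    Irreducible (X ^ 5 + C 376 * X ^ 3 + C 72 * X ^ 2 + C 13460 * X + C 156 : ℚ[X]) ∧
    (∀ z : ℂ, Polynomial.aeval z
        (X ^ 5 + C 376 * X ^ 3 + C 72 * X ^ 2 + C 13460 * X + C 156 : ℚ[X]) = 0 →
      ¬ IsSolvableByRad ℚ z) := by
  have hcritical :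
      (c - 1) ^ 5 + (c - 6) ^ 5 + (c - 11) ^ 5 + (c - 13) ^ 5 + (c - 19) ^ 5 = 0 := by
    have h := sum_sub_pow_eq_zero_of_isLocalMin Finset.univ ![1, 6, 11, 13, 19] 5
      (.of_forall fun t ↦ by simpa [Fin.sum_univ_five] using hc t)
    simp only [Fin.sum_univ_five, Matrix.cons_val] at h
    linear_combination -h
  have hroot : aeval (c - 10) (sixAverageQuintic ℚ) = 0 := by
    have h := (five_mul_aeval_sub_ten_sixAverageQuintic c).trans hcritical
    simpa using h
  have halgebraic : IsAlgebraic ℚ c := by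
    have h : IsAlgebraic ℚ (c - 10) := ⟨_, irreducible_sixAverageQuintic.ne_zero, hroot⟩
    simpa using h.add (isAlgebraic_algebraMap (10 : ℚ))
  refine ⟨hcritical, halgebraic, hroot, fun h ↦ ?_, irreducible_sixAverageQuintic,
    fun z ↦ not_isSolvableByRad_of_aeval_sixAverageQuintic_eq_zero⟩
  have hsub : IsSolvableByRad ℚ (c - 10) := by
    simpa [sub_eq_add_neg] using h.add _ _ (.neg _ (.base 10))
  exact not_isSolvableByRad_of_aeval_sixAverageQuintic_eq_zero hroot hsub
end
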